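/- For every real number γ with 0 < γ ≤ 2 and every real number z, the family (ω_k^{(γ)} · e^{−i k z})_{k ∈ ℤ} is summable (in ℂ) and its sum equals |2 sin(z/2)|^γ; that is, |2 sin(z/2)|^γ = Σ_{k=−∞}^{∞} ω_k^{(γ)} e^{−i k z}. -/

import Mathlib

/-!
The function `t ↦ |2 sin t| ^ γ` is continuous and `π`-periodic, so it is the pointwise sum of its
Fourier series as soon as its Fourier coefficients are summable; evaluating at `t = -z / 2` gives
the claim once the coefficients are known to be the `ω_k`.

Both `ω_k` and the Fourier coefficients satisfy
`(γ / 2 + k + 1) a (k + 1) = (k - γ / 2) a k`: for the former this is the functional equation of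
`1 / Γ` (`fracCenteredCoeff_succ`), for the latter an integration by parts
(`sinFourierIntegral_succ`). The factor on the left does not vanish for `k ≥ 0`, nor the one on the
right for `k < 0`, so equality for every `k` follows from the case `k = 0`, which is a Beta integral
(`sinFourierIntegral_zero`). The same recurrence makes `γ |ω_k|` a telescoping difference of
nonnegative terms for `k ≥ 1`, whence summability (`summable_fracCenteredCoeff`).
-/

open Real Complex

/-- Fractional centered difference coefficients
`ω_k^{(γ)} = (−1)^k Γ(γ+1) / (Γ(γ/2 − k + 1) Γ(γ/2 + k + 1))`. -/
noncomputable def fracCenteredCoeff (γ : ℝ) (k : ℤ) : ℝ :=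
  (-1 : ℝ) ^ k * Real.Gamma (γ + 1) /
    (Real.Gamma (γ / 2 - k + 1) * Real.Gamma (γ / 2 + k + 1))

theorem fracCenteredCoeff_neg (γ : ℝ) (k : ℤ) :
    fracCenteredCoeff γ (-k) = fracCenteredCoeff γ k := by
  have h : (-1 : ℝ) ^ (-k) = (-1) ^ k := by
    rw [zpow_neg, ← inv_zpow]; norm_num
  unfold fracCenteredCoeff
  rw [h]
  push_cast
  rw [sub_neg_eq_add, ← sub_eq_add_neg, mul_comm (Real.Gamma (γ / 2 + k + 1))]

/-- The functional equation of `1 / Γ`, valid at every real number thanks to `Γ (-n) = 0`. -/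
theorem inv_Gamma_eq_mul_inv_Gamma_add_one (s : ℝ) :
    (Real.Gamma s)⁻¹ = s * (Real.Gamma (s + 1))⁻¹ := by
  rcases eq_or_ne s 0 with rfl | hs
  · simp
  · rw [Real.Gamma_add_one hs, mul_inv, mul_inv_cancel_left₀ hs]

theorem fracCenteredCoeff_succ (γ : ℝ) (k : ℤ) :
    (γ / 2 + k + 1) * fracCenteredCoeff γ (k + 1) = (k - γ / 2) * fracCenteredCoeff γ k := by
  have h1 := inv_Gamma_eq_mul_inv_Gamma_add_one (γ / 2 - k)
  have h2 := inv_Gamma_eq_mul_inv_Gamma_add_one (γ / 2 + k + 1)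
  unfold fracCenteredCoeff
  rw [zpow_add_one₀ (by norm_num : (-1 : ℝ) ≠ 0)]
  simp only [div_eq_mul_inv, mul_inv] at *
  push_cast
  rw [show γ * 2⁻¹ - ((k : ℝ) + 1) + 1 = γ * 2⁻¹ - k by ring,
    show γ * 2⁻¹ + ((k : ℝ) + 1) + 1 = γ * 2⁻¹ + k + 1 + 1 by ring, h1, h2]
  ring

/-- With `T k = (γ / 2 + k) |ω_k|`, the recurrence gives `γ |ω_k| = T k - T (k + 1)` for `k ≥ 1`,
so the partial sums of `|ω_k|` telescope and stay bounded. -/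
theorem summable_fracCenteredCoeff {γ : ℝ} (hγ0 : 0 < γ) (hγ2 : γ ≤ 2) :
    Summable (fracCenteredCoeff γ) := by
  have hnat : Summable fun n : ℕ => fracCenteredCoeff γ n := by
    rw [← summable_nat_add_iff 1]
    apply Summable.of_norm
    set T : ℕ → ℝ := fun n =>
      (γ / 2 + (n + 1)) * ‖fracCenteredCoeff γ ((n + 1 : ℕ) : ℤ)‖ with hT
    have hstep (n : ℕ) :
        γ * ‖fracCenteredCoeff γ ((n + 1 : ℕ) : ℤ)‖ = T n - T (n + 1) := by
      have h := congrArg norm (fracCenteredCoeff_succ γ ((n + 1 : ℕ) : ℤ))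
      have hn : (0 : ℝ) ≤ n := n.cast_nonneg
      have hl : 0 ≤ γ / 2 + ((n + 1 : ℕ) : ℤ) + 1 := by positivity
      have hr : 0 ≤ (((n + 1 : ℕ) : ℤ) : ℝ) - γ / 2 := by push_cast; linarith
      rw [norm_mul, norm_mul, Real.norm_of_nonneg hl, Real.norm_of_nonneg hr] at h
      simp only [hT]
      push_cast at h ⊢
      linear_combination h
    refine summable_of_sum_range_le (c := T 0 / γ) (fun n => norm_nonneg _) fun n => ?_
    rw [le_div_iff₀' hγ0, Finset.mul_sum, Finset.sum_congr rfl fun i _ => hstep i,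
      Finset.sum_range_sub']
    have : 0 ≤ T n := by positivity
    linarith
  exact Summable.of_nat_of_neg hnat (by simpa only [fracCenteredCoeff_neg] using hnat)

/-- `π` times the `(-k)`-th Fourier coefficient of the `π`-periodic function `|2 sin t| ^ γ`; the
absolute value is dropped because `sin` is nonnegative on `[0, π]`. -/
noncomputable def sinFourierIntegral (γ : ℝ) (k : ℤ) : ℂ :=
  ∫ t in (0 : ℝ)..π, (((2 * Real.sin t) ^ γ : ℝ) : ℂ) * Complex.exp (2 * Complex.I * k * t)

theorem continuous_sinFourierIntegrand {γ : ℝ} (hγ0 : 0 < γ) (k : ℤ) :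
    Continuous fun t : ℝ =>
      (((2 * Real.sin t) ^ γ : ℝ) : ℂ) * Complex.exp (2 * Complex.I * k * t) := by
  have : Continuous fun t : ℝ => (2 * Real.sin t) ^ γ :=
    (by fun_prop : Continuous fun t : ℝ => 2 * Real.sin t).rpow_const fun _ => Or.inr hγ0.le
  fun_prop

/-- Integrating the derivative of `(2 sin t) ^ (γ + 1) * exp (i (2 k + 1) t)`, which vanishes at
both endpoints, gives the recurrence that the coefficients `ω_k` satisfy. -/
theorem sinFourierIntegral_succ {γ : ℝ} (hγ0 : 0 < γ) (k : ℤ) :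
    (γ / 2 + k + 1 : ℂ) * sinFourierIntegral γ (k + 1)
      = (k - γ / 2 : ℂ) * sinFourierIntegral γ k := by
  have hderiv : ∀ t ∈ Set.uIcc 0 π, HasDerivAt
      (fun t : ℝ => (((2 * Real.sin t) ^ (γ + 1) : ℝ) : ℂ) *
        Complex.exp (Complex.I * (2 * k + 1) * t))
      (2 * ((γ / 2 + k + 1 : ℂ) * ((((2 * Real.sin t) ^ γ : ℝ) : ℂ) *
          Complex.exp (2 * Complex.I * ((k + 1 : ℤ) : ℂ) * t)) -
        (k - γ / 2 : ℂ) * ((((2 * Real.sin t) ^ γ : ℝ) : ℂ) *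
          Complex.exp (2 * Complex.I * k * t)))) t := by
    intro t ht
    rw [Set.uIcc_of_le Real.pi_pos.le] at ht
    have hs : 0 ≤ 2 * Real.sin t := by
      have := Real.sin_nonneg_of_mem_Icc ht
      positivity
    have h1 : HasDerivAt (fun t : ℝ => (2 * Real.sin t) ^ (γ + 1))
        ((2 * Real.cos t) * (γ + 1) * (2 * Real.sin t) ^ (γ + 1 - 1)) t :=
      ((Real.hasDerivAt_sin t).const_mul 2).rpow_const (Or.inr (by linarith))
    have h2 : HasDerivAt (fun t : ℝ => Complex.exp (Complex.I * (2 * k + 1) * t))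
        (Complex.exp (Complex.I * (2 * k + 1) * t) * (Complex.I * (2 * k + 1) * 1)) t :=
      ((Complex.ofRealCLM.hasDerivAt (x := t)).const_mul _).cexp
    refine (h1.ofReal_comp.mul h2).congr_deriv ?_
    rw [add_sub_cancel_right, Real.rpow_add_one' hs (by linarith)]
    have e1 : Complex.exp (2 * Complex.I * ((k + 1 : ℤ) : ℂ) * t) =
        Complex.exp (Complex.I * (2 * k + 1) * t) * Complex.exp (t * Complex.I) := by
      rw [← Complex.exp_add]; push_cast; ring_nf
    have e2 : Complex.exp (2 * Complex.I * k * t) =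
        Complex.exp (Complex.I * (2 * k + 1) * t) * Complex.exp (-t * Complex.I) := by
      rw [← Complex.exp_add]; ring_nf
    rw [e1, e2]
    push_cast
    rw [Complex.sin, Complex.cos]
    linear_combination (-(2 * k + 1) * (((2 * Real.sin t) ^ γ : ℝ) : ℂ) *
      Complex.exp (Complex.I * (2 * k + 1) * t) *
      (Complex.exp (t * Complex.I) - Complex.exp (-t * Complex.I))) * Complex.I_sq
  have hc (j : ℤ) := (continuous_sinFourierIntegrand hγ0 j).intervalIntegrable
    (μ := MeasureTheory.volume) 0 π
  have hint := intervalIntegral.integral_eq_sub_of_hasDerivAt hderiv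
    ((((hc (k + 1)).const_mul _).sub ((hc k).const_mul _)).const_mul _)
  rw [intervalIntegral.integral_const_mul, intervalIntegral.integral_sub
    ((hc (k + 1)).const_mul _) ((hc k).const_mul _), intervalIntegral.integral_const_mul,
    intervalIntegral.integral_const_mul] at hint
  simp only [Real.sin_pi, Real.sin_zero, mul_zero,
    Real.zero_rpow (by linarith : γ + 1 ≠ 0), Complex.ofReal_zero, zero_mul, sub_zero] at hint
  have := (mul_eq_zero.mp hint).resolve_left two_ne_zero
  exact sub_eq_zero.mp this

/-- Under `x = (1 - cos t) / 2` one has `x (1 - x) = (sin t / 2) ^ 2` and `dx = (sin t / 2) dt`. -/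
theorem integral_half_sin_rpow {γ : ℝ} (hγ0 : 0 < γ) :
    ∫ t in (0 : ℝ)..π, (Real.sin t / 2) ^ γ =
      Real.Gamma ((γ + 1) / 2) ^ 2 / Real.Gamma (γ + 1) := by
  have hs : 0 < (γ + 1) / 2 := by linarith
  have hbeta : ∫ x in Set.Ioo (0 : ℝ) 1, x ^ ((γ + 1) / 2 - 1) * (1 - x) ^ ((γ + 1) / 2 - 1) =
      Real.Gamma ((γ + 1) / 2) ^ 2 / Real.Gamma (γ + 1) := by
    have h := Complex.betaIntegral_eq_Gamma_mul_div ((γ + 1) / 2 : ℝ) ((γ + 1) / 2 : ℝ)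
      (by simpa using hs) (by simpa using hs)
    rw [← Complex.ofReal_add, Complex.Gamma_ofReal, Complex.Gamma_ofReal, add_halves,
      Complex.betaIntegral, intervalIntegral.integral_of_le zero_le_one,
      MeasureTheory.integral_Ioc_eq_integral_Ioo] at h
    apply Complex.ofReal_injective
    rw [← integral_complex_ofReal]
    push_cast
    rw [sq, ← h]
    refine MeasureTheory.setIntegral_congr_fun measurableSet_Ioo fun x hx => ?_
    rw [Complex.ofReal_cpow hx.1.le, Complex.ofReal_cpow (sub_nonneg.mpr hx.2.le)]
    push_cast
    rfl
  have himage : (fun t : ℝ => (1 - Real.cos t) / 2) '' Set.Ioo 0 π = Set.Ioo 0 1 := by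
    ext x
    constructor
    · rintro ⟨t, ht, rfl⟩
      have h1 : Real.cos t < 1 := by
        simpa using Real.cos_lt_cos_of_nonneg_of_le_pi le_rfl ht.2.le ht.1
      have h2 : -1 < Real.cos t := by
        simpa using Real.cos_lt_cos_of_nonneg_of_le_pi ht.1.le le_rfl ht.2
      constructor <;> simp only <;> linarith
    · intro hx
      refine ⟨Real.arccos (1 - 2 * x), ⟨Real.arccos_pos.mpr (by linarith [hx.1]),
        Real.arccos_lt_pi.mpr (by linarith [hx.2])⟩, ?_⟩
      simp only
      rw [Real.cos_arccos (by linarith [hx.2]) (by linarith [hx.1])]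
      ring
  have hsubst := MeasureTheory.integral_image_eq_integral_abs_deriv_smul
    (s := Set.Ioo 0 π) (f := fun t : ℝ => (1 - Real.cos t) / 2) (f' := fun t => Real.sin t / 2)
    measurableSet_Ioo
    (fun t _ => by
      simpa using (((Real.hasDerivAt_cos t).const_sub 1).div_const 2).hasDerivWithinAt)
    (fun a ha b hb hab => Real.injOn_cos (Set.Ioo_subset_Icc_self ha)
      (Set.Ioo_subset_Icc_self hb) (by simp only at hab; linarith))
    (fun x => x ^ ((γ + 1) / 2 - 1) * (1 - x) ^ ((γ + 1) / 2 - 1))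
  rw [himage, hbeta] at hsubst
  rw [hsubst, intervalIntegral.integral_of_le Real.pi_pos.le,
    MeasureTheory.integral_Ioc_eq_integral_Ioo]
  refine MeasureTheory.setIntegral_congr_fun measurableSet_Ioo fun t ht => ?_
  have hsin : 0 < Real.sin t / 2 := by
    have := Real.sin_pos_of_mem_Ioo ht
    positivity
  simp only [smul_eq_mul]
  rw [abs_of_pos hsin, ← Real.mul_rpow (by linarith [Real.cos_le_one t])
      (by linarith [Real.neg_one_le_cos t]),
    show (1 - Real.cos t) / 2 * (1 - (1 - Real.cos t) / 2) = (Real.sin t / 2) ^ (2 : ℝ) by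
      rw [Real.rpow_two]; linear_combination -(1 / 4) * Real.sin_sq_add_cos_sq t,
    ← Real.rpow_mul hsin.le, ← Real.rpow_one_add' hsin.le (by linarith)]
  congr 1
  ring

/-- The central coefficient, from the Beta integral and Legendre's duplication formula. -/
theorem sinFourierIntegral_zero {γ : ℝ} (hγ0 : 0 < γ) :
    sinFourierIntegral γ 0 = (π * fracCenteredCoeff γ 0 : ℝ) := by
  have h4 : (0 : ℝ) < 4 ^ γ := by positivity
  have hI : ∫ t in (0 : ℝ)..π, (2 * Real.sin t) ^ γ =
      4 ^ γ * (Real.Gamma ((γ + 1) / 2) ^ 2 / Real.Gamma (γ + 1)) := by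
    rw [← integral_half_sin_rpow hγ0, ← intervalIntegral.integral_const_mul]
    refine intervalIntegral.integral_congr fun t ht => ?_
    rw [Set.uIcc_of_le Real.pi_pos.le] at ht
    have := Real.sin_nonneg_of_mem_Icc ht
    rw [← Real.mul_rpow (by norm_num) (by positivity)]
    congr 1
    ring
  have hdup := congrArg (· ^ 2) (Real.Gamma_mul_Gamma_add_half ((γ + 1) / 2))
  simp only [mul_pow, Real.sq_sqrt Real.pi_pos.le] at hdup
  rw [show (γ + 1) / 2 + 1 / 2 = γ / 2 + 1 by ring, show 2 * ((γ + 1) / 2) = γ + 1 by ring,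
    show 1 - (γ + 1) = -γ by ring, ← Real.rpow_natCast ((2 : ℝ) ^ (-γ)) 2,
    ← Real.rpow_mul (by norm_num), mul_comm (-γ), Real.rpow_mul (by norm_num),
    show (2 : ℝ) ^ ((2 : ℕ) : ℝ) = 4 by norm_num, Real.rpow_neg (by norm_num)] at hdup
  have hG1 : Real.Gamma (γ / 2 + 1) ≠ 0 := (Real.Gamma_pos_of_pos (by linarith)).ne'
  have hG2 : Real.Gamma (γ + 1) ≠ 0 := (Real.Gamma_pos_of_pos (by linarith)).ne'
  have hval : 4 ^ γ * (Real.Gamma ((γ + 1) / 2) ^ 2 / Real.Gamma (γ + 1)) =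
      π * fracCenteredCoeff γ 0 := by
    simp only [fracCenteredCoeff, Int.cast_zero, zpow_zero, sub_zero, add_zero, one_mul]
    field_simp at hdup ⊢
    linear_combination hdup
  rw [← hval, ← hI, sinFourierIntegral, ← intervalIntegral.integral_ofReal]
  simp

theorem sinFourierIntegral_eq {γ : ℝ} (hγ0 : 0 < γ) (k : ℤ) :
    sinFourierIntegral γ k = (π * fracCenteredCoeff γ k : ℝ) := by
  induction k using Int.induction_on with
  | zero => exact sinFourierIntegral_zero hγ0
  | succ n ih =>
    have hne : ((γ / 2 + n + 1 : ℝ) : ℂ) ≠ 0 := by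
      rw [Complex.ofReal_ne_zero]; positivity
    have h1 := sinFourierIntegral_succ hγ0 n
    have h2 := congrArg (fun x : ℝ => (x : ℂ)) (fracCenteredCoeff_succ γ n)
    rw [ih] at h1
    apply mul_left_cancel₀ hne
    push_cast at h1 h2 ⊢
    linear_combination h1 - π * h2
  | pred n ih =>
    have hne : (((-n - 1 : ℤ) - γ / 2 : ℝ) : ℂ) ≠ 0 := by
      rw [Complex.ofReal_ne_zero]
      push_cast
      have : (0 : ℝ) ≤ n := n.cast_nonneg
      linarith
    have h1 := sinFourierIntegral_succ hγ0 (-n - 1)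
    have h2 := congrArg (fun x : ℝ => (x : ℂ)) (fracCenteredCoeff_succ γ (-n - 1))
    rw [sub_add_cancel] at h1 h2
    rw [ih] at h1
    apply mul_left_cancel₀ hne
    push_cast at h1 h2 ⊢
    linear_combination -h1 + π * h2

theorem stmt_3 (γ : ℝ) (hγ0 : 0 < γ) (hγ2 : γ ≤ 2) (z : ℝ) :
    Summable (fun k : ℤ =>
      (fracCenteredCoeff γ k : ℂ) * Complex.exp (-Complex.I * (k : ℂ) * (z : ℂ))) ∧
    ((|2 * Real.sin (z / 2)| ^ γ : ℝ) : ℂ) =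
      ∑' k : ℤ, (fracCenteredCoeff γ k : ℂ) * Complex.exp (-Complex.I * (k : ℂ) * (z : ℂ)) := by
  have : Fact (0 < π) := ⟨Real.pi_pos⟩
  set g : ℝ → ℂ := fun t => ((|2 * Real.sin t| ^ γ : ℝ) : ℂ) with hg
  have hper : Function.Periodic g π := fun t => by
    simp only [hg, Real.sin_add_pi, mul_neg, abs_neg]
  have hcont : Continuous g := by
    have : Continuous fun t : ℝ => |2 * Real.sin t| ^ γ :=
      (by fun_prop : Continuous fun t : ℝ => |2 * Real.sin t|).rpow_const fun _ => Or.inr hγ0.le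
    exact Complex.continuous_ofReal.comp this
  let f : C(AddCircle π, ℂ) := ⟨hper.lift, continuous_coinduced_dom.mpr hcont⟩
  have hcoeff (n : ℤ) : fourierCoeff f n = (fracCenteredCoeff γ n : ℂ) := by
    have hint : ∫ t in (0 : ℝ)..0 + π, fourier (-n) (t : AddCircle π) • f t =
        sinFourierIntegral γ (-n) := by
      rw [zero_add, sinFourierIntegral]
      refine intervalIntegral.integral_congr fun t ht => ?_
      rw [Set.uIcc_of_le Real.pi_pos.le] at ht
      have hs : 0 ≤ 2 * Real.sin t := by
        have := Real.sin_nonneg_of_mem_Icc ht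
        positivity
      have hf : f (t : AddCircle π) = g t := rfl
      have hπ : (π : ℂ) ≠ 0 := Complex.ofReal_ne_zero.mpr Real.pi_ne_zero
      rw [hf, fourier_coe_apply, smul_eq_mul, mul_comm]
      simp only [hg, abs_of_nonneg hs]
      congr 2
      field_simp
    rw [fourierCoeff_eq_intervalIntegral f n 0, hint, sinFourierIntegral_eq hγ0,
      fracCenteredCoeff_neg, Complex.real_smul, ← Complex.ofReal_mul]
    congr 1
    field_simp
  have hsum : Summable (fourierCoeff f) := by
    rw [funext hcoeff]
    exact Complex.ofRealCLM.summable (summable_fracCenteredCoeff hγ0 hγ2)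
  -- `fourier k` on the circle of length `π` is `exp (2 i k t)`, hence the point `t = -z / 2`.
  have hF := has_pointwise_sum_fourier_series_of_summable hsum ((-(z / 2) : ℝ) : AddCircle π)
  have hval : f ((-(z / 2) : ℝ) : AddCircle π) = ((|2 * Real.sin (z / 2)| ^ γ : ℝ) : ℂ) := by
    change g (-(z / 2)) = _
    simp only [hg, Real.sin_neg, mul_neg, abs_neg]
  have hterm (k : ℤ) : fourierCoeff f k • fourier k ((-(z / 2) : ℝ) : AddCircle π) =
      (fracCenteredCoeff γ k : ℂ) * Complex.exp (-Complex.I * (k : ℂ) * (z : ℂ)) := by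
    have hπ : (π : ℂ) ≠ 0 := Complex.ofReal_ne_zero.mpr Real.pi_ne_zero
    rw [hcoeff, fourier_coe_apply, smul_eq_mul]
    congr 2
    push_cast
    field_simp
  rw [hval, funext hterm] at hF
  exact ⟨hF.summable, hF.tsum_eq.symm⟩
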